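/- arXiv:2211.08792 — 4 statements merged into one kernel-verified Lean document; each statement's English description precedes it below -/
import Mathlib

section
/- Consider a 2×2 zero-sum game with payoff matrix entries u11, u12, u21, u22, and let S ⊆ [0,1]×[0,1] be its set of Nash equilibria. If S is finite and S contains a pair (p*, q*) with p* ∈ (0,1) and q* ∈ (0,1), then S = {(p*, q*)}, i.e., (p*, q*) is the unique Nash equilibrium of the game. -/
/-- Expected payoff of the 2×2 zero-sum game with payoff matrix entries
`u11, u12, u21, u22`, when Player 1 plays its first action with probability `p`
and Player 2 plays its first action with probability `q`. -/
noncomputable def payoff (u11 u12 u21 u22 p q : ℝ) : ℝ :=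
  u11 * p * q + u12 * p * (1 - q) + u21 * (1 - p) * q + u22 * (1 - p) * (1 - q)

/-- `(p, q)` is a Nash equilibrium of the 2×2 zero-sum game. -/
def IsNE (u11 u12 u21 u22 p q : ℝ) : Prop :=
  p ∈ Set.Icc (0 : ℝ) 1 ∧ q ∈ Set.Icc (0 : ℝ) 1 ∧
    (∀ p' ∈ Set.Icc (0 : ℝ) 1, payoff u11 u12 u21 u22 p' q ≤ payoff u11 u12 u21 u22 p q) ∧
    (∀ q' ∈ Set.Icc (0 : ℝ) 1, payoff u11 u12 u21 u22 p q ≤ payoff u11 u12 u21 u22 p q')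

open Set

/-!
Let `f` be convex in its first and concave in its second variable. All its saddle points share one
value `v`, and they are the pairs `(x, y)` with `f x · ≤ v` and `v ≤ f · y`: two independent
conditions, each of which cuts out a convex set. The expected payoff is affine in each strategy, so
the Nash equilibria form a convex, hence connected, subset of the plane, and a countable connected
set has at most one point.
-/

section ConvexInequalities

variable {𝕜 E β ι : Type*} [Semiring 𝕜] [PartialOrder 𝕜] [AddCommMonoid E] [SMul 𝕜 E]
  [AddCommMonoid β] [PartialOrder β] [IsOrderedAddMonoid β] [Module 𝕜 β] [PosSMulMono 𝕜 β]
  {s : Set E} {t : Set ι} {f : ι → E → β}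

lemma convex_setOf_forall_le (hs : Convex 𝕜 s) (hf : ∀ i ∈ t, ConvexOn 𝕜 s (f i)) (c : β) :
    Convex 𝕜 {x ∈ s | ∀ i ∈ t, f i x ≤ c} :=
  fun _ ⟨hx, hxc⟩ _ ⟨hy, hyc⟩ _ _ ha hb hab ↦ ⟨hs hx hy ha hb hab, fun i hi ↦
    ((hf i hi).convex_le c ⟨hx, hxc i hi⟩ ⟨hy, hyc i hi⟩ ha hb hab).2⟩

lemma convex_setOf_forall_ge (hs : Convex 𝕜 s) (hf : ∀ i ∈ t, ConcaveOn 𝕜 s (f i)) (c : β) :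
    Convex 𝕜 {x ∈ s | ∀ i ∈ t, c ≤ f i x} :=
  convex_setOf_forall_le (β := βᵒᵈ) hs hf c

end ConvexInequalities

section SaddlePoints

variable {E F β : Type*} {X : Set E} {Y : Set F} {f : E → F → β}

lemma setOf_isSaddlePointOn_eq_prod [Preorder β] {a : E} {b : F} (ha : a ∈ X) (hb : b ∈ Y)
    (h : IsSaddlePointOn X Y f a b) :
    {z ∈ X ×ˢ Y | IsSaddlePointOn X Y f z.1 z.2} =
      {x ∈ X | ∀ y ∈ Y, f x y ≤ f a b} ×ˢ {y ∈ Y | ∀ x ∈ X, f a b ≤ f x y} := by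
  ext ⟨x, y⟩
  constructor
  · rintro ⟨⟨hx, hy⟩, hxy⟩
    exact ⟨⟨hx, fun y' hy' ↦ (hxy a ha y' hy').trans (h a ha y hy)⟩,
      ⟨hy, fun x' hx' ↦ (h x hx b hb).trans (hxy x' hx' b hb)⟩⟩
  · rintro ⟨⟨hx, hx_le⟩, ⟨hy, le_hy⟩⟩
    exact ⟨⟨hx, hy⟩, fun x' hx' y' hy' ↦ (hx_le y' hy').trans (le_hy x' hx')⟩

theorem convex_setOf_isSaddlePointOn {𝕜 : Type*} [Semiring 𝕜] [PartialOrder 𝕜]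
    [AddCommMonoid E] [SMul 𝕜 E] [AddCommMonoid F] [SMul 𝕜 F] [AddCommMonoid β] [PartialOrder β]
    [IsOrderedAddMonoid β] [Module 𝕜 β] [PosSMulMono 𝕜 β]
    (hconvex : ∀ y ∈ Y, ConvexOn 𝕜 X (f · y))
    (hconcave : ∀ x ∈ X, ConcaveOn 𝕜 Y (f x)) :
    Convex 𝕜 {z ∈ X ×ˢ Y | IsSaddlePointOn X Y f z.1 z.2} := by
  obtain hempty | ⟨⟨a, b⟩, ⟨ha, hb⟩, hab⟩ :=
    {z ∈ X ×ˢ Y | IsSaddlePointOn X Y f z.1 z.2}.eq_empty_or_nonempty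
  · rw [hempty]
    exact convex_empty
  · rw [setOf_isSaddlePointOn_eq_prod ha hb hab]
    exact (convex_setOf_forall_le (hconvex b hb).1 hconvex _).prod
      (convex_setOf_forall_ge (hconcave a ha).1 hconcave _)

end SaddlePoints

section Payoff

variable (u11 u12 u21 u22 : ℝ)

lemma concaveOn_payoff_left {s : Set ℝ} (hs : Convex ℝ s) (q : ℝ) :
    ConcaveOn ℝ s (payoff u11 u12 u21 u22 · q) := by
  refine ⟨hs, fun p _ p' _ a b _ _ hab ↦ le_of_eq ?_⟩
  simp only [payoff, smul_eq_mul]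
  linear_combination (u21 * q + u22 * (1 - q)) * hab

lemma convexOn_payoff_right {s : Set ℝ} (hs : Convex ℝ s) (p : ℝ) :
    ConvexOn ℝ s (payoff u11 u12 u21 u22 p) := by
  refine ⟨hs, fun q _ q' _ a b _ _ hab ↦ le_of_eq ?_⟩
  simp only [payoff, smul_eq_mul]
  linear_combination -(u12 * p + u22 * (1 - p)) * hab

-- A saddle point minimizes over the first variable, hence the sign: `-payoff` is Player 2's payoff.
lemma isNE_iff_isSaddlePointOn {p q : ℝ} :
    IsNE u11 u12 u21 u22 p q ↔ (p, q) ∈ Icc (0 : ℝ) 1 ×ˢ Icc (0 : ℝ) 1 ∧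
      IsSaddlePointOn (Icc 0 1) (Icc 0 1) (fun p q ↦ -payoff u11 u12 u21 u22 p q) p q := by
  constructor
  · rintro ⟨hp, hq, hmax, hmin⟩
    exact ⟨⟨hp, hq⟩, fun p' hp' q' hq' ↦ neg_le_neg ((hmax p' hp').trans (hmin q' hq'))⟩
  · rintro ⟨⟨hp, hq⟩, hsaddle⟩
    exact ⟨hp, hq, fun p' hp' ↦ neg_le_neg_iff.1 (hsaddle p' hp' q hq),
      fun q' hq' ↦ neg_le_neg_iff.1 (hsaddle p hp q' hq')⟩

theorem convex_setOf_isNE : Convex ℝ {pq : ℝ × ℝ | IsNE u11 u12 u21 u22 pq.1 pq.2} := by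
  simp only [isNE_iff_isSaddlePointOn]
  exact convex_setOf_isSaddlePointOn
    (fun q _ ↦ (concaveOn_payoff_left u11 u12 u21 u22 (convex_Icc 0 1) q).neg)
    (fun p _ ↦ (convexOn_payoff_right u11 u12 u21 u22 (convex_Icc 0 1) p).neg)

end Payoff

theorem stmt2_general (u11 u12 u21 u22 p q : ℝ)
    (hcount : Set.Countable {pq : ℝ × ℝ | IsNE u11 u12 u21 u22 pq.1 pq.2})
    (hNE : IsNE u11 u12 u21 u22 p q) :
    {pq : ℝ × ℝ | IsNE u11 u12 u21 u22 pq.1 pq.2} = {(p, q)} :=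
  have hsub : {pq : ℝ × ℝ | IsNE u11 u12 u21 u22 pq.1 pq.2}.Subsingleton :=
    hcount.isTotallyDisconnected _ Subset.rfl (convex_setOf_isNE u11 u12 u21 u22).isPreconnected
  hsub.eq_singleton_of_mem hNE

theorem stmt2 (u11 u12 u21 u22 p q : ℝ)
    (hfin : Set.Finite {pq : ℝ × ℝ | IsNE u11 u12 u21 u22 pq.1 pq.2})
    (hNE : IsNE u11 u12 u21 u22 p q)
    (hp : p ∈ Set.Ioo (0 : ℝ) 1) (hq : q ∈ Set.Ioo (0 : ℝ) 1) :
    {pq : ℝ × ℝ | IsNE u11 u12 u21 u22 pq.1 pq.2} = {(p, q)} :=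
  stmt2_general u11 u12 u21 u22 p q hfin.countable hNE
end

section
/- Consider a 2×2 zero-sum game with payoff matrix entries u11, u12, u21, u22, and let S ⊆ [0,1]×[0,1] be its set of Nash equilibria. Then either S has exactly one element or S is infinite. Moreover, if S = {(p*, q*)} is a singleton, then exactly one of the following holds: (1) p* ∈ {0,1} and q* ∈ {0,1}; or (2) p* ∈ (0,1) and q* ∈ (0,1). -/
/-!
Nash equilibria are the saddle points of the loss of Player 1. They exist by Sion's minimax theorem,
and they form a convex set because saddle points are exchangeable; a nonempty convex set is
connected, so it is a singleton or infinite. If Player 1 mixes while Player 2 plays a pure `q`, then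
Player 1 is indifferent against `q`, and since the incentive of Player 2 to leave `q` is affine in
`p`, it is absent at one of the pure strategies of Player 1, which therefore gives a second
equilibrium.
-/

open Set AffineMap

section SaddlePoint

variable {E F β : Type*}

/-- The saddle points of `f` lying in `X × Y`; membership is required separately because
`IsSaddlePointOn X Y f a b` does not include `a ∈ X` and `b ∈ Y`. -/
def saddlePointsOn [Preorder β] (X : Set E) (Y : Set F) (f : E → F → β) : Set (E × F) :=
  {z | z.1 ∈ X ∧ z.2 ∈ Y ∧ IsSaddlePointOn X Y f z.1 z.2}

theorem convex_saddlePointsOn {𝕜 : Type*} [Semiring 𝕜] [PartialOrder 𝕜] [AddCommMonoid E]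
    [SMul 𝕜 E] [AddCommMonoid F] [SMul 𝕜 F] [Preorder β] {X : Set E} {Y : Set F} {f : E → F → β}
    (hfy : ∀ y ∈ Y, QuasiconvexOn 𝕜 X (f · y)) (hfx : ∀ x ∈ X, QuasiconcaveOn 𝕜 Y (f x)) :
    Convex 𝕜 (saddlePointsOn X Y f) := by
  rintro ⟨a, b⟩ ⟨ha, hb, h⟩ ⟨a', b'⟩ ⟨ha', hb', h'⟩ s t hs ht hst
  have left_mem (y) (hy : y ∈ Y) : s • a + t • a' ∈ {x ∈ X | f x y ≤ f a b} :=
    hfy y hy _ ⟨ha, h a ha y hy⟩ ⟨ha', h.swap_right ha hb' h' a ha y hy⟩ hs ht hst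
  have right_mem (x) (hx : x ∈ X) : s • b + t • b' ∈ {y ∈ Y | f a b ≤ f x y} :=
    hfx x hx _ ⟨hb, h x hx b hb⟩ ⟨hb', h.swap_left ha' hb h' x hx b hb⟩ hs ht hst
  exact ⟨(left_mem b hb).1, (right_mem a ha).1,
    fun x hx y hy ↦ (left_mem y hy).2.trans (right_mem x hx).2⟩

theorem saddlePointsOn_eq_singleton_or_infinite
    [TopologicalSpace E] [T1Space E] [AddCommGroup E] [Module ℝ E] [IsTopologicalAddGroup E]
    [ContinuousSMul ℝ E] [TopologicalSpace F] [T1Space F] [AddCommGroup F] [Module ℝ F]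
    [IsTopologicalAddGroup F] [ContinuousSMul ℝ F] {X : Set E} {Y : Set F} {f : E → F → ℝ}
    (hX : X.Nonempty) (hXk : IsCompact X) (hY : Y.Nonempty) (hYk : IsCompact Y)
    (hfy : ∀ y ∈ Y, LowerSemicontinuousOn (f · y) X) (hfy' : ∀ y ∈ Y, QuasiconvexOn ℝ X (f · y))
    (hfx : ∀ x ∈ X, UpperSemicontinuousOn (f x) Y) (hfx' : ∀ x ∈ X, QuasiconcaveOn ℝ Y (f x)) :
    (∃ z, saddlePointsOn X Y f = {z}) ∨ (saddlePointsOn X Y f).Infinite := by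
  have hXc : Convex ℝ X := (hfy' _ hY.some_mem).convex
  have hYc : Convex ℝ Y := (hfx' _ hX.some_mem).convex
  obtain ⟨a, ha, b, hb, hab⟩ :=
    Sion.exists_isSaddlePointOn hX hXc hXk hfy hfy' hYc hY hYk hfx hfx'
  have hne : (saddlePointsOn X Y f).Nonempty := ⟨(a, b), ha, hb, hab⟩
  exact hne.exists_eq_singleton_or_nontrivial.imp_right
    (convex_saddlePointsOn hfy' hfx').isPreconnected.infinite_of_nontrivial

end SaddlePoint

section Quasilinear

theorem quasilinearOn_affineMap {𝕜 E : Type*} [Field 𝕜] [LinearOrder 𝕜] [IsStrictOrderedRing 𝕜]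
    [AddCommGroup E] [Module 𝕜 E] {s : Set E} (hs : Convex 𝕜 s) (g : E →ᵃ[𝕜] 𝕜) :
    QuasilinearOn 𝕜 s g :=
  ⟨fun r ↦ hs.inter ((convex_Iic r).affine_preimage g),
    fun r ↦ hs.inter ((convex_Ici r).affine_preimage g)⟩

variable {𝕜 β : Type*} [Field 𝕜] [LinearOrder 𝕜] [IsStrictOrderedRing 𝕜] [LE β]
  {a b : 𝕜} {f : 𝕜 → β}

theorem forall_mem_Icc_le_iff_of_quasiconvexOn (hab : a ≤ b) (hf : QuasiconvexOn 𝕜 (Icc a b) f)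
    {c : β} : (∀ x ∈ Icc a b, f x ≤ c) ↔ f a ≤ c ∧ f b ≤ c where
  mp h := ⟨h a (left_mem_Icc.2 hab), h b (right_mem_Icc.2 hab)⟩
  mpr h _ hx :=
    ((hf c).ordConnected.out ⟨left_mem_Icc.2 hab, h.1⟩ ⟨right_mem_Icc.2 hab, h.2⟩ hx).2

theorem forall_mem_Icc_ge_iff_of_quasiconcaveOn (hab : a ≤ b) (hf : QuasiconcaveOn 𝕜 (Icc a b) f)
    {c : β} : (∀ x ∈ Icc a b, c ≤ f x) ↔ c ≤ f a ∧ c ≤ f b :=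
  forall_mem_Icc_le_iff_of_quasiconvexOn (β := βᵒᵈ) hab hf

end Quasilinear

variable {u11 u12 u21 u22 p q : ℝ}

theorem payoff_neg (u11 u12 u21 u22 p q : ℝ) :
    payoff (-u11) (-u12) (-u21) (-u22) p q = -payoff u11 u12 u21 u22 p q := by
  unfold payoff; ring

theorem payoff_swap (u11 u12 u21 u22 p q : ℝ) :
    payoff u11 u21 u12 u22 q p = payoff u11 u12 u21 u22 p q := by
  unfold payoff; ring

theorem payoff_eq_lineMap (u11 u12 u21 u22 p q : ℝ) :
    payoff u11 u12 u21 u22 p q =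
      lineMap (payoff u11 u12 u21 u22 0 q) (payoff u11 u12 u21 u22 1 q) p := by
  simp only [payoff, lineMap_apply_ring]; ring

theorem continuous_payoff_left (u11 u12 u21 u22 q : ℝ) :
    Continuous (payoff u11 u12 u21 u22 · q) := by
  unfold payoff; fun_prop

theorem continuous_payoff_right (u11 u12 u21 u22 p : ℝ) :
    Continuous (payoff u11 u12 u21 u22 p) := by
  unfold payoff; fun_prop

theorem quasilinearOn_payoff_left {s : Set ℝ} (hs : Convex ℝ s) (u11 u12 u21 u22 q : ℝ) :
    QuasilinearOn ℝ s (payoff u11 u12 u21 u22 · q) := by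
  rw [funext fun p ↦ payoff_eq_lineMap u11 u12 u21 u22 p q]
  exact quasilinearOn_affineMap hs _

theorem quasilinearOn_payoff_right {s : Set ℝ} (hs : Convex ℝ s) (u11 u12 u21 u22 p : ℝ) :
    QuasilinearOn ℝ s (payoff u11 u12 u21 u22 p) := by
  simpa only [payoff_swap] using quasilinearOn_payoff_left hs u11 u21 u12 u22 p

theorem exists_pure_payoff_le {q' : ℝ} (hp : p ∈ Icc 0 1)
    (h : payoff u11 u12 u21 u22 p q ≤ payoff u11 u12 u21 u22 p q') :
    ∃ i ∈ ({0, 1} : Set ℝ), payoff u11 u12 u21 u22 i q ≤ payoff u11 u12 u21 u22 i q' := by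
  contrapose! h
  rw [payoff_eq_lineMap _ _ _ _ p q, payoff_eq_lineMap _ _ _ _ p q']
  exact lineMap_strict_mono_endpoints (h 0 (by simp)) (h 1 (by simp)) hp.1 hp.2

theorem setOf_isNE_eq_saddlePointsOn (u11 u12 u21 u22 : ℝ) :
    {pq : ℝ × ℝ | IsNE u11 u12 u21 u22 pq.1 pq.2} =
      saddlePointsOn (Icc 0 1) (Icc 0 1) (payoff (-u11) (-u12) (-u21) (-u22)) := by
  ext ⟨p, q⟩
  simp only [saddlePointsOn, IsSaddlePointOn, payoff_neg, neg_le_neg_iff]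
  constructor
  · rintro ⟨hp, hq, hp_max, hq_min⟩
    exact ⟨hp, hq, fun p' hp' q' hq' ↦ (hp_max p' hp').trans (hq_min q' hq')⟩
  · rintro ⟨hp, hq, h⟩
    exact ⟨hp, hq, fun p' hp' ↦ h p' hp' q hq, fun q' hq' ↦ h p hp q' hq'⟩

theorem setOf_isNE_eq_singleton_or_infinite (u11 u12 u21 u22 : ℝ) :
    (∃ a : ℝ × ℝ, {pq : ℝ × ℝ | IsNE u11 u12 u21 u22 pq.1 pq.2} = {a}) ∨
      {pq : ℝ × ℝ | IsNE u11 u12 u21 u22 pq.1 pq.2}.Infinite := by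
  have hI : (Icc (0 : ℝ) 1).Nonempty := nonempty_Icc.2 zero_le_one
  have hIc : Convex ℝ (Icc (0 : ℝ) 1) := convex_Icc 0 1
  rw [setOf_isNE_eq_saddlePointsOn]
  exact saddlePointsOn_eq_singleton_or_infinite hI isCompact_Icc hI isCompact_Icc
    (fun q _ ↦ (continuous_payoff_left _ _ _ _ q).lowerSemicontinuous.lowerSemicontinuousOn _)
    (fun q _ ↦ (quasilinearOn_payoff_left hIc _ _ _ _ q).1)
    (fun p _ ↦ (continuous_payoff_right _ _ _ _ p).upperSemicontinuous.upperSemicontinuousOn _)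
    (fun p _ ↦ (quasilinearOn_payoff_right hIc _ _ _ _ p).2)

theorem isNE_iff_forall_pure : IsNE u11 u12 u21 u22 p q ↔
    p ∈ Icc 0 1 ∧ q ∈ Icc 0 1 ∧
      (payoff u11 u12 u21 u22 0 q ≤ payoff u11 u12 u21 u22 p q ∧
        payoff u11 u12 u21 u22 1 q ≤ payoff u11 u12 u21 u22 p q) ∧
      (payoff u11 u12 u21 u22 p q ≤ payoff u11 u12 u21 u22 p 0 ∧
        payoff u11 u12 u21 u22 p q ≤ payoff u11 u12 u21 u22 p 1) := by
  have hI : Convex ℝ (Icc (0 : ℝ) 1) := convex_Icc 0 1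
  rw [IsNE,
    forall_mem_Icc_le_iff_of_quasiconvexOn zero_le_one (quasilinearOn_payoff_left hI ..).1,
    forall_mem_Icc_ge_iff_of_quasiconcaveOn zero_le_one (quasilinearOn_payoff_right hI ..).2]

theorem isNE_swap : IsNE (-u11) (-u21) (-u12) (-u22) q p ↔ IsNE u11 u12 u21 u22 p q := by
  simp only [IsNE, payoff_neg, payoff_swap, neg_le_neg_iff]
  tauto

namespace IsNE

theorem payoff_eq_of_mem_Ioo (h : IsNE u11 u12 u21 u22 p q) (hp : p ∈ Ioo 0 1) (p' : ℝ) :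
    payoff u11 u12 u21 u22 p' q = payoff u11 u12 u21 u22 p q := by
  obtain ⟨-, -, ⟨h0, h1⟩, -⟩ := isNE_iff_forall_pure.1 h
  rw [payoff_eq_lineMap _ _ _ _ p] at h0 h1
  have h01 : payoff u11 u12 u21 u22 0 q = payoff u11 u12 u21 u22 1 q :=
    le_antisymm ((left_le_lineMap_iff_le hp.1).1 h0) ((right_le_lineMap_iff_le hp.2).1 h1)
  rw [payoff_eq_lineMap _ _ _ _ p', payoff_eq_lineMap _ _ _ _ p, h01, lineMap_same_apply,
    lineMap_same_apply]

theorem exists_pure_left (h : IsNE u11 u12 u21 u22 p q) (hp : p ∈ Ioo 0 1)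
    (hq : q ∈ ({0, 1} : Set ℝ)) : ∃ i ∈ ({0, 1} : Set ℝ), IsNE u11 u12 u21 u22 i q := by
  have indifferent (p' p'') : payoff u11 u12 u21 u22 p' q ≤ payoff u11 u12 u21 u22 p'' q :=
    ((h.payoff_eq_of_mem_Ioo hp p').trans (h.payoff_eq_of_mem_Ioo hp p'').symm).le
  have stay : payoff u11 u12 u21 u22 p q ≤ payoff u11 u12 u21 u22 p (1 - q) :=
    h.2.2.2 (1 - q) ⟨sub_nonneg.2 h.2.1.2, sub_le_self 1 h.2.1.1⟩
  obtain ⟨i, hi, hi_stay⟩ := exists_pure_payoff_le h.1 stay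
  have hiI : i ∈ Icc 0 1 := pair_subset (by simp) (by simp) hi
  refine ⟨i, hi, isNE_iff_forall_pure.2 ⟨hiI, h.2.1, ⟨indifferent 0 i, indifferent 1 i⟩, ?_⟩⟩
  rcases hq with rfl | rfl
  · exact ⟨le_rfl, by simpa only [sub_zero] using hi_stay⟩
  · exact ⟨by simpa only [sub_self] using hi_stay, le_rfl⟩

theorem left_pure_of_right_pure (h : IsNE u11 u12 u21 u22 p q)
    (huniq : ∀ p', IsNE u11 u12 u21 u22 p' q → p' = p) (hq : q ∈ ({0, 1} : Set ℝ)) :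
    p ∈ ({0, 1} : Set ℝ) := by
  by_contra hp
  have hp_mixed : p ∈ Ioo 0 1 := Icc_sdiff_both.subset ⟨h.1, hp⟩
  obtain ⟨i, hi, hNE⟩ := h.exists_pure_left hp_mixed hq
  exact hp (huniq i hNE ▸ hi)

theorem right_pure_of_left_pure (h : IsNE u11 u12 u21 u22 p q)
    (huniq : ∀ q', IsNE u11 u12 u21 u22 p q' → q' = q) (hp : p ∈ ({0, 1} : Set ℝ)) :
    q ∈ ({0, 1} : Set ℝ) :=
  (isNE_swap.2 h).left_pure_of_right_pure (fun q' hq' ↦ huniq q' (isNE_swap.1 hq')) hp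

end IsNE

theorem stmt4 (u11 u12 u21 u22 : ℝ) :
    ((∃ a : ℝ × ℝ, {pq : ℝ × ℝ | IsNE u11 u12 u21 u22 pq.1 pq.2} = {a}) ∨
      Set.Infinite {pq : ℝ × ℝ | IsNE u11 u12 u21 u22 pq.1 pq.2}) ∧
    (∀ p q : ℝ, {pq : ℝ × ℝ | IsNE u11 u12 u21 u22 pq.1 pq.2} = {(p, q)} →
      Xor' (p ∈ ({0, 1} : Set ℝ) ∧ q ∈ ({0, 1} : Set ℝ))
           (p ∈ Set.Ioo (0 : ℝ) 1 ∧ q ∈ Set.Ioo (0 : ℝ) 1)) := by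
  refine ⟨setOf_isNE_eq_singleton_or_infinite u11 u12 u21 u22, fun p q hS ↦ ?_⟩
  obtain ⟨h : IsNE u11 u12 u21 u22 p q, huniq⟩ := eq_singleton_iff_unique_mem.1 hS
  have pure_iff : p ∈ ({0, 1} : Set ℝ) ↔ q ∈ ({0, 1} : Set ℝ) :=
    ⟨h.right_pure_of_left_pure fun q' h' ↦ congrArg Prod.snd (huniq (p, q') h'),
      h.left_pure_of_right_pure fun p' h' ↦ congrArg Prod.fst (huniq (p', q) h')⟩
  have hp : p ∈ Icc 0 1 := h.1
  have hq : q ∈ Icc 0 1 := h.2.1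
  rw [← Icc_sdiff_both, mem_sdiff, mem_sdiff]
  tauto
end

section
/- Consider a 2×2 zero-sum game with payoff matrix entries u11, u12, u21, u22, whose set of Nash equilibria S is a singleton {(p*, q*)}. Then (p*, q*) = (0, 1) if and only if u22 > u21 > u11. Furthermore, in that case the equilibrium payoff is u(p*, q*) = u21. -/
/-!
The inequalities `u11 < u21 < u22` say that the pure profile `(0, 1)` is a strict saddle point, and
by interchangeability of saddle points a strict one is the only one. Conversely, if `(0, 1)` is the
only equilibrium, then `u11 ≤ u21 ≤ u22`, and neither inequality is an equality. A tie `u11 = u21`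
makes Player 1 indifferent against `q = 1`, so `(t, 1)` is an equilibrium as long as Player 2 does
not gain by leaving `q = 1`; this holds for small `t > 0` if `u21 < u22`, and for `t = 1` if
`u21 = u22` and `u11 ≤ u12`. In the remaining case `u12 < u11 = u21 = u22` the profile `(0, 0)` is
an equilibrium. A tie `u21 = u22` is the same situation with the players exchanged.
-/

section SaddlePoint

variable {E F β : Type*} [Preorder β] {X : Set E} {Y : Set F} {f : E → F → β}
  {a x : E} {b y : F}

lemma eq_and_eq_of_isSaddlePointOn_of_forall_lt (ha : a ∈ X) (hb : b ∈ Y)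
    (hmin : ∀ x ∈ X, x ≠ a → f a b < f x b) (hmax : ∀ y ∈ Y, y ≠ b → f a y < f a b)
    (hx : x ∈ X) (hy : y ∈ Y) (h : IsSaddlePointOn X Y f x y) : x = a ∧ y = b := by
  have hxy : f x b ≤ f a y := h a ha b hb
  constructor
  · by_contra hxa
    have hya : f a y ≤ f a b := by
      rcases eq_or_ne y b with rfl | hyb
      exacts [le_rfl, (hmax y hy hyb).le]
    exact ((hmin x hx hxa).trans_le (hxy.trans hya)).false
  · by_contra hyb
    have hxa : f a b ≤ f x b := by
      rcases eq_or_ne x a with rfl | hxa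
      exacts [le_rfl, (hmin x hx hxa).le]
    exact ((hmax y hy hyb).trans_le (hxa.trans hxy)).false

end SaddlePoint

lemma forall_lineMap_mem_iff_of_convex {𝕜 E : Type*} [Ring 𝕜] [PartialOrder 𝕜]
    [IsOrderedRing 𝕜] [AddCommGroup E] [Module 𝕜 E] {s : Set E} (hs : Convex 𝕜 s) {a b : E} :
    (∀ t ∈ Set.Icc (0 : 𝕜) 1, AffineMap.lineMap a b t ∈ s) ↔ a ∈ s ∧ b ∈ s := by
  refine ⟨fun h ↦ ⟨?_, ?_⟩, fun h t ht ↦ hs.lineMap_mem h.1 h.2 ht⟩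
  · simpa only [AffineMap.lineMap_apply_zero] using h 0 (Set.left_mem_Icc.2 zero_le_one)
  · simpa only [AffineMap.lineMap_apply_one] using h 1 (Set.right_mem_Icc.2 zero_le_one)

section Game

variable {u11 u12 u21 u22 p q t : ℝ}

lemma payoff_eq_lineMap_left :
    payoff u11 u12 u21 u22 p q =
      AffineMap.lineMap (payoff u11 u12 u21 u22 0 q) (payoff u11 u12 u21 u22 1 q) p := by
  rw [AffineMap.lineMap_apply_ring']
  unfold payoff
  ring

lemma payoff_eq_lineMap_right :
    payoff u11 u12 u21 u22 p q =
      AffineMap.lineMap (payoff u11 u12 u21 u22 p 0) (payoff u11 u12 u21 u22 p 1) q := by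
  rw [AffineMap.lineMap_apply_ring']
  unfold payoff
  ring

lemma isNE_iff_pure_deviations :
    IsNE u11 u12 u21 u22 p q ↔
      p ∈ Set.Icc (0 : ℝ) 1 ∧ q ∈ Set.Icc (0 : ℝ) 1 ∧
      (payoff u11 u12 u21 u22 0 q ≤ payoff u11 u12 u21 u22 p q ∧
        payoff u11 u12 u21 u22 1 q ≤ payoff u11 u12 u21 u22 p q) ∧
      (payoff u11 u12 u21 u22 p q ≤ payoff u11 u12 u21 u22 p 0 ∧
        payoff u11 u12 u21 u22 p q ≤ payoff u11 u12 u21 u22 p 1) := by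
  have hrow := forall_lineMap_mem_iff_of_convex (convex_Iic (𝕜 := ℝ) (payoff u11 u12 u21 u22 p q))
    (a := payoff u11 u12 u21 u22 0 q) (b := payoff u11 u12 u21 u22 1 q)
  have hcol := forall_lineMap_mem_iff_of_convex (convex_Ici (𝕜 := ℝ) (payoff u11 u12 u21 u22 p q))
    (a := payoff u11 u12 u21 u22 p 0) (b := payoff u11 u12 u21 u22 p 1)
  simp only [← payoff_eq_lineMap_left, Set.mem_Iic] at hrow
  simp only [← payoff_eq_lineMap_right, Set.mem_Ici] at hcol
  rw [IsNE, hrow, hcol]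

lemma isNE_zero_one_iff : IsNE u11 u12 u21 u22 0 1 ↔ u11 ≤ u21 ∧ u21 ≤ u22 := by
  simp [isNE_iff_pure_deviations, payoff]

-- `IsSaddlePointOn` minimizes over its first variable, hence the exchange of `p` and `q`.
lemma IsNE.isSaddlePointOn (h : IsNE u11 u12 u21 u22 p q) :
    IsSaddlePointOn (Set.Icc 0 1) (Set.Icc 0 1) (fun q p ↦ payoff u11 u12 u21 u22 p q) q p :=
  fun q' hq' p' hp' ↦ (h.2.2.1 p' hp').trans (h.2.2.2 q' hq')

lemma IsNE.eq_zero_and_eq_one (h : IsNE u11 u12 u21 u22 p q) (h₁ : u11 < u21) (h₂ : u21 < u22) :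
    p = 0 ∧ q = 1 := by
  have hcol : ∀ q' ∈ Set.Icc (0 : ℝ) 1, q' ≠ 1 →
      payoff u11 u12 u21 u22 0 1 < payoff u11 u12 u21 u22 0 q' := by
    intro q' hq' hne
    have hgain : 0 < (u22 - u21) * (1 - q') :=
      mul_pos (sub_pos.2 h₂) (sub_pos.2 (hq'.2.lt_of_ne hne))
    unfold payoff
    linarith
  have hrow : ∀ p' ∈ Set.Icc (0 : ℝ) 1, p' ≠ 0 →
      payoff u11 u12 u21 u22 p' 1 < payoff u11 u12 u21 u22 0 1 := by
    intro p' hp' hne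
    have hloss : 0 < (u21 - u11) * p' := mul_pos (sub_pos.2 h₁) (hp'.1.lt_of_ne' hne)
    unfold payoff
    linarith
  exact (eq_and_eq_of_isSaddlePointOn_of_forall_lt (Set.right_mem_Icc.2 zero_le_one)
    (Set.left_mem_Icc.2 zero_le_one) hcol hrow h.2.1 h.1 h.isSaddlePointOn).symm

lemma isNE_one_right_iff_of_tie (ht : t ∈ Set.Icc (0 : ℝ) 1) :
    IsNE u11 u12 u11 u22 t 1 ↔ u11 ≤ payoff u11 u12 u11 u22 t 0 := by
  have hconst (s : ℝ) : payoff u11 u12 u11 u22 s 1 = u11 := by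
    unfold payoff
    ring
  simp [isNE_iff_pure_deviations, hconst, ht.1, ht.2]

lemma exists_isNE_one_right_of_tie_of_lt (h : u11 < u22) :
    ∃ t, 0 < t ∧ IsNE u11 u12 u11 u22 t 1 := by
  have hcont : Continuous fun t ↦ payoff u11 u12 u11 u22 t 0 := by
    unfold payoff
    fun_prop
  have hzero : u11 < payoff u11 u12 u11 u22 0 0 := by simpa [payoff] using h
  have hnear : ∀ᶠ t in nhdsWithin (0 : ℝ) (Set.Ioi 0), u11 < payoff u11 u12 u11 u22 t 0 :=
    nhdsWithin_le_nhds (hcont.continuousAt.eventually_const_lt hzero)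
  obtain ⟨t, hlt, ht⟩ := (hnear.and (Ioc_mem_nhdsGT zero_lt_one)).exists
  exact ⟨t, ht.1, (isNE_one_right_iff_of_tie (Set.Ioc_subset_Icc_self ht)).2 hlt.le⟩

lemma exists_isNE_ne_of_tie (h : u11 ≤ u22) :
    ∃ p q, IsNE u11 u12 u11 u22 p q ∧ (p, q) ≠ (0, 1) := by
  rcases h.lt_or_eq with hlt | rfl
  · obtain ⟨t, ht, hNE⟩ := exists_isNE_one_right_of_tie_of_lt (u12 := u12) hlt
    exact ⟨t, 1, hNE, by simp [ht.ne']⟩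
  · rcases le_total u11 u12 with hle | hle
    · refine ⟨1, 1, (isNE_one_right_iff_of_tie (Set.right_mem_Icc.2 zero_le_one)).2 ?_, by simp⟩
      simpa [payoff] using hle
    · exact ⟨0, 0, by simpa [isNE_iff_pure_deviations, payoff] using hle, by simp⟩

-- Exchange the players, and then the two actions of each, so that `(0, 1)` corresponds to itself.
lemma isNE_exchange_iff :
    IsNE (-u22) (-u12) (-u21) (-u11) p q ↔ IsNE u11 u12 u21 u22 (1 - q) (1 - p) := by
  have hpayoff (p q : ℝ) : payoff (-u22) (-u12) (-u21) (-u11) p q =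
      -payoff u11 u12 u21 u22 (1 - q) (1 - p) := by
    unfold payoff
    ring
  simp only [isNE_iff_pure_deviations, hpayoff, neg_le_neg_iff, sub_zero, sub_self,
    ← Set.Icc.mem_iff_one_sub_mem]
  tauto

lemma lt_of_isNE_zero_one_unique (h : IsNE u11 u12 u21 u22 0 1)
    (huniq : ∀ p q, IsNE u11 u12 u21 u22 p q → (p, q) = (0, 1)) : u11 < u21 := by
  obtain ⟨h₁, h₂⟩ := isNE_zero_one_iff.1 h
  refine h₁.lt_of_ne ?_
  rintro rfl
  obtain ⟨p, q, hNE, hne⟩ := exists_isNE_ne_of_tie (u12 := u12) h₂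
  exact hne (huniq p q hNE)

lemma lt_and_lt_of_isNE_zero_one_unique (h : IsNE u11 u12 u21 u22 0 1)
    (huniq : ∀ p q, IsNE u11 u12 u21 u22 p q → (p, q) = (0, 1)) : u11 < u21 ∧ u21 < u22 := by
  refine ⟨lt_of_isNE_zero_one_unique h huniq, neg_lt_neg_iff.1 ?_⟩
  refine lt_of_isNE_zero_one_unique (u12 := -u12) (u22 := -u11)
    (isNE_exchange_iff.2 (by simpa using h)) fun p q hNE ↦ ?_
  obtain ⟨hq, hp⟩ := Prod.mk.inj (huniq _ _ (isNE_exchange_iff.1 hNE))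
  exact Prod.ext (by linarith) (by linarith)

end Game

theorem stmt11_general (u11 u12 u21 u22 : ℝ) :
    ({pq : ℝ × ℝ | IsNE u11 u12 u21 u22 pq.1 pq.2} = {(0, 1)} ↔ u22 > u21 ∧ u21 > u11) ∧
    (u22 > u21 ∧ u21 > u11 →
      ∀ p q, IsNE u11 u12 u21 u22 p q → payoff u11 u12 u21 u22 p q = u21) := by
  refine ⟨⟨fun hS ↦ ?_, fun h ↦ ?_⟩, fun h p q hNE ↦ ?_⟩
  · obtain ⟨hNE, huniq⟩ := Set.eq_singleton_iff_unique_mem.1 hS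
    exact (lt_and_lt_of_isNE_zero_one_unique hNE fun p q ↦ huniq (p, q)).symm
  · refine Set.eq_singleton_iff_unique_mem.2 ⟨isNE_zero_one_iff.2 ⟨h.2.le, h.1.le⟩, ?_⟩
    exact fun _ hNE ↦ Prod.ext_iff.2 (hNE.eq_zero_and_eq_one h.2 h.1)
  · obtain ⟨rfl, rfl⟩ := hNE.eq_zero_and_eq_one h.2 h.1
    simp [payoff]

theorem stmt11 (u11 u12 u21 u22 p q : ℝ)
    (hS : {pq : ℝ × ℝ | IsNE u11 u12 u21 u22 pq.1 pq.2} = {(p, q)}) :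
    ((p, q) = ((0 : ℝ), (1 : ℝ)) ↔ (u22 > u21 ∧ u21 > u11)) ∧
    ((u22 > u21 ∧ u21 > u11) → payoff u11 u12 u21 u22 p q = u21) := by
  obtain ⟨hiff, hval⟩ := hS ▸ stmt11_general u11 u12 u21 u22
  exact ⟨Set.singleton_eq_singleton_iff.symm.trans hiff, (hval · p q (hS.ge rfl))⟩
end

section
/- Consider a 2×2 zero-sum game with payoff matrix entries u11, u12, u21, u22, let δ = u11 − u12 − u21 + u22, and let S ⊆ [0,1]×[0,1] be its set of Nash equilibria. Then S = {(p, q) ∈ [0,1]×[0,1] : p = 0 and 0 ≤ q ≤ (u22 − u12)/δ} with 0 < (u22 − u12)/δ < 1, if and only if u11 > u21, u21 = u22 and u22 > u12. Furthermore, in that case every (p*, q*) ∈ S satisfies u(p*, q*) = u21 = u22. -/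
/-!
The payoff is affine in each variable, so a pair is an equilibrium exactly when neither player
profits from deviating to a pure action, which is a sign condition on the slopes `rowGain` (in `p`)
and `colGain` (in `q`). Write `t = (u22 - u12) / δ`. If `(0, t)` is an equilibrium and `0 < t < 1`,
Player 2 is indifferent, so `u21 = u22`; the equilibrium `(0, 0)` gives `u12 ≤ u22`, and then
these bounds on `t` yield the two strict inequalities. Conversely, given the three
conditions, `p > 0` would make Player 2 avoid its first action, and then Player 1 would prefer its
second action, a contradiction; at `p = 0` only `rowGain ≤ 0` remains, which says `q ≤ t`.
-/

open Set

section OrderedAlgebra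

theorem forall_mem_Icc_sub_mul_nonpos_iff {R : Type*} [CommRing R] [PartialOrder R]
    [IsOrderedRing R] {x a : R} :
    (∀ y ∈ Icc (0 : R) 1, (y - x) * a ≤ 0) ↔ 0 ≤ x * a ∧ (1 - x) * a ≤ 0 := by
  constructor
  · intro h
    have at_zero := h 0 (left_mem_Icc.2 zero_le_one)
    rw [zero_sub, neg_mul, neg_nonpos] at at_zero
    exact ⟨at_zero, h 1 (right_mem_Icc.2 zero_le_one)⟩
  · rintro ⟨h₀, h₁⟩ y ⟨hy₀, hy₁⟩
    calc (y - x) * a = y * ((1 - x) * a) - (1 - y) * (x * a) := by ring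
      _ ≤ 0 := sub_nonpos.2 <| (mul_nonpos_of_nonneg_of_nonpos hy₀ h₁).trans
        (mul_nonneg (sub_nonneg.2 hy₁) h₀)

theorem div_mem_Ioo_zero_one_iff {K : Type*} [Field K] [LinearOrder K] [IsStrictOrderedRing K]
    {x y : K} (hx : 0 ≤ x) : x / y ∈ Ioo (0 : K) 1 ↔ 0 < x ∧ x < y := by
  constructor
  · rintro ⟨hpos, hlt⟩
    have hx' : 0 < x := hx.lt_of_ne' fun h => by simp [h] at hpos
    have hy : 0 < y := (div_pos_iff_of_pos_left hx').1 hpos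
    exact ⟨hx', (div_lt_one hy).1 hlt⟩
  · rintro ⟨hx', hxy⟩
    have hy := hx'.trans hxy
    exact ⟨div_pos hx' hy, (div_lt_one hy).2 hxy⟩

end OrderedAlgebra

/-- What Player 1 gains by playing its first action rather than its second one, when Player 2 plays
its first action with probability `q`: the slope of the payoff in `p`. -/
noncomputable def rowGain (u11 u12 u21 u22 q : ℝ) : ℝ :=
  payoff u11 u12 u21 u22 1 q - payoff u11 u12 u21 u22 0 q

/-- The change in Player 1's payoff when Player 2 plays its first action rather than its second one,
while Player 1 plays its first action with probability `p`: the slope of the payoff in `q`.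
Player 2 minimizes the payoff, so it prefers its first action when this is negative. -/
noncomputable def colGain (u11 u12 u21 u22 p : ℝ) : ℝ :=
  payoff u11 u12 u21 u22 p 1 - payoff u11 u12 u21 u22 p 0

section Game

variable {u11 u12 u21 u22 p q : ℝ}

theorem rowGain_eq :
    rowGain u11 u12 u21 u22 q = q * (u11 - u12 - u21 + u22) - (u22 - u12) := by
  unfold rowGain payoff
  ring

theorem colGain_eq :
    colGain u11 u12 u21 u22 p = p * (u11 - u12 - u21 + u22) - (u22 - u21) := by
  unfold colGain payoff
  ring

theorem payoff_sub_payoff_left (p' : ℝ) :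
    payoff u11 u12 u21 u22 p' q - payoff u11 u12 u21 u22 p q =
      (p' - p) * rowGain u11 u12 u21 u22 q := by
  unfold rowGain payoff
  ring

theorem payoff_sub_payoff_right (q' : ℝ) :
    payoff u11 u12 u21 u22 p q' - payoff u11 u12 u21 u22 p q =
      (q' - q) * colGain u11 u12 u21 u22 p := by
  unfold colGain payoff
  ring

theorem payoff_zero_left : payoff u11 u12 u21 u22 0 q = u21 * q + u22 * (1 - q) := by
  unfold payoff
  ring

theorem isNE_iff_gain :
    IsNE u11 u12 u21 u22 p q ↔ p ∈ Icc (0 : ℝ) 1 ∧ q ∈ Icc (0 : ℝ) 1 ∧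
      (0 ≤ p * rowGain u11 u12 u21 u22 q ∧ (1 - p) * rowGain u11 u12 u21 u22 q ≤ 0) ∧
      (q * colGain u11 u12 u21 u22 p ≤ 0 ∧ 0 ≤ (1 - q) * colGain u11 u12 u21 u22 p) := by
  have row_optimal : (∀ p' ∈ Icc (0 : ℝ) 1,
      payoff u11 u12 u21 u22 p' q ≤ payoff u11 u12 u21 u22 p q) ↔
      0 ≤ p * rowGain u11 u12 u21 u22 q ∧ (1 - p) * rowGain u11 u12 u21 u22 q ≤ 0 := by
    simp_rw [← forall_mem_Icc_sub_mul_nonpos_iff, ← payoff_sub_payoff_left, sub_nonpos]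
  have col_optimal : (∀ q' ∈ Icc (0 : ℝ) 1,
      payoff u11 u12 u21 u22 p q ≤ payoff u11 u12 u21 u22 p q') ↔
      q * colGain u11 u12 u21 u22 p ≤ 0 ∧ 0 ≤ (1 - q) * colGain u11 u12 u21 u22 p := by
    have h := forall_mem_Icc_sub_mul_nonpos_iff (x := q) (a := -colGain u11 u12 u21 u22 p)
    simpa only [mul_neg, neg_nonpos, neg_nonneg, ← payoff_sub_payoff_right, sub_nonneg] using h
  rw [IsNE, row_optimal, col_optimal]

namespace IsNE

theorem rowGain_nonneg (h : IsNE u11 u12 u21 u22 p q) (hp : 0 < p) :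
    0 ≤ rowGain u11 u12 u21 u22 q :=
  nonneg_of_mul_nonneg_right (isNE_iff_gain.1 h).2.2.1.1 hp

theorem rowGain_nonpos (h : IsNE u11 u12 u21 u22 p q) (hp : p < 1) :
    rowGain u11 u12 u21 u22 q ≤ 0 :=
  nonpos_of_mul_nonpos_right (isNE_iff_gain.1 h).2.2.1.2 (sub_pos.2 hp)

theorem colGain_nonpos (h : IsNE u11 u12 u21 u22 p q) (hq : 0 < q) :
    colGain u11 u12 u21 u22 p ≤ 0 :=
  nonpos_of_mul_nonpos_right (isNE_iff_gain.1 h).2.2.2.1 hq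

theorem colGain_nonneg (h : IsNE u11 u12 u21 u22 p q) (hq : q < 1) :
    0 ≤ colGain u11 u12 u21 u22 p :=
  nonneg_of_mul_nonneg_right (isNE_iff_gain.1 h).2.2.2.2 (sub_pos.2 hq)

theorem colGain_eq_zero (h : IsNE u11 u12 u21 u22 p q) (hq : q ∈ Ioo (0 : ℝ) 1) :
    colGain u11 u12 u21 u22 p = 0 :=
  (h.colGain_nonpos hq.1).antisymm (h.colGain_nonneg hq.2)

theorem left_eq_zero (h : IsNE u11 u12 u21 u22 p q) (hδ : 0 < u11 - u12 - u21 + u22)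
    (h12 : u12 < u22) (h21 : u22 ≤ u21) : p = 0 := by
  by_contra hp0
  have hp : 0 < p := h.1.1.lt_of_ne' hp0
  have hq : 0 < q := by
    have hrow := h.rowGain_nonneg hp
    rw [rowGain_eq] at hrow
    exact pos_of_mul_pos_left (by linarith) hδ.le
  have hcol := h.colGain_nonpos hq
  rw [colGain_eq] at hcol
  linarith [mul_pos hp hδ]

end IsNE

theorem isNE_zero_left_iff (h : u21 = u22) :
    IsNE u11 u12 u21 u22 0 q ↔ q ∈ Icc (0 : ℝ) 1 ∧ rowGain u11 u12 u21 u22 q ≤ 0 := by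
  simp [isNE_iff_gain, colGain_eq, h]

theorem rowGain_nonpos_iff (hδ : 0 < u11 - u12 - u21 + u22) :
    rowGain u11 u12 u21 u22 q ≤ 0 ↔ q ≤ (u22 - u12) / (u11 - u12 - u21 + u22) := by
  rw [rowGain_eq, sub_nonpos, le_div_iff₀ hδ]

theorem threshold_mem_Ioo_iff (h : u12 ≤ u22) :
    (u22 - u12) / (u11 - u12 - u21 + u22) ∈ Ioo (0 : ℝ) 1 ↔ u12 < u22 ∧ u21 < u11 := by
  rw [div_mem_Ioo_zero_one_iff (sub_nonneg.2 h), sub_pos]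
  exact and_congr_right fun _ => ⟨fun h' => by linarith, fun h' => by linarith⟩

theorem isNE_iff_of_lt_of_eq_of_lt (h1 : u21 < u11) (h2 : u21 = u22) (h12 : u12 < u22) :
    IsNE u11 u12 u21 u22 p q ↔
      p = 0 ∧ 0 ≤ q ∧ q ≤ (u22 - u12) / (u11 - u12 - u21 + u22) := by
  have hδ : 0 < u11 - u12 - u21 + u22 := by linarith
  have ht := (threshold_mem_Ioo_iff h12.le).2 ⟨h12, h1⟩
  constructor
  · intro h
    obtain rfl := h.left_eq_zero hδ h12 h2.ge
    exact ⟨rfl, h.2.1.1, (rowGain_nonpos_iff hδ).1 (h.rowGain_nonpos zero_lt_one)⟩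
  · rintro ⟨rfl, hq₀, hqt⟩
    exact (isNE_zero_left_iff h2).2 ⟨⟨hq₀, hqt.trans ht.2.le⟩, (rowGain_nonpos_iff hδ).2 hqt⟩

theorem lt_and_eq_and_lt_of_isNE
    (h0 : IsNE u11 u12 u21 u22 0 0)
    (ht : IsNE u11 u12 u21 u22 0 ((u22 - u12) / (u11 - u12 - u21 + u22)))
    (hmem : (u22 - u12) / (u11 - u12 - u21 + u22) ∈ Ioo (0 : ℝ) 1) :
    u21 < u11 ∧ u21 = u22 ∧ u12 < u22 := by
  have hcol := ht.colGain_eq_zero hmem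
  have hrow := h0.rowGain_nonpos zero_lt_one
  rw [colGain_eq] at hcol
  rw [rowGain_eq] at hrow
  obtain ⟨h12, h1⟩ := (threshold_mem_Ioo_iff (by linarith)).1 hmem
  exact ⟨h1, by linarith, h12⟩

end Game

theorem stmt15 (u11 u12 u21 u22 δ : ℝ)
    (hδ : δ = u11 - u12 - u21 + u22) :
    (({pq : ℝ × ℝ | IsNE u11 u12 u21 u22 pq.1 pq.2} =
        {pq : ℝ × ℝ | pq.1 = 0 ∧ 0 ≤ pq.2 ∧ pq.2 ≤ (u22 - u12) / δ} ∧
      0 < (u22 - u12) / δ ∧ (u22 - u12) / δ < 1) ↔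
      (u11 > u21 ∧ u21 = u22 ∧ u22 > u12)) ∧
    ((u11 > u21 ∧ u21 = u22 ∧ u22 > u12) →
      ∀ p q : ℝ, IsNE u11 u12 u21 u22 p q →
        payoff u11 u12 u21 u22 p q = u21 ∧ payoff u11 u12 u21 u22 p q = u22) := by
  subst hδ
  refine ⟨⟨?_, ?_⟩, ?_⟩
  · rintro ⟨hS, ht⟩
    have mem_S := Set.ext_iff.1 hS
    exact lt_and_eq_and_lt_of_isNE ((mem_S (0, 0)).2 ⟨rfl, le_rfl, ht.1.le⟩)
      ((mem_S (0, _)).2 ⟨rfl, ht.1.le, le_rfl⟩) ht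
  · rintro ⟨h1, h2, h12⟩
    exact ⟨Set.ext fun _ => isNE_iff_of_lt_of_eq_of_lt h1 h2 h12,
      (threshold_mem_Ioo_iff h12.le).2 ⟨h12, h1⟩⟩
  · rintro ⟨h1, h2, h12⟩ p q h
    obtain ⟨rfl, -⟩ := (isNE_iff_of_lt_of_eq_of_lt h1 h2 h12).1 h
    have value : payoff u11 u12 u21 u22 0 q = u22 := by
      rw [payoff_zero_left, h2]
      ring
    exact ⟨value.trans h2.symm, value⟩
end
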